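/- arXiv:2405.10152 — 2 statements merged into one kernel-verified Lean document; each statement's English description precedes it below -/
import Mathlib

section
/- In a balanced extensional BC±I-algebra, the twist is natural on elements of arity 1 → 1: if a has arity 1 → 1, then a ∘ θ⁺ = θ⁺ ∘ a and a ∘ θ⁻ = θ⁻ ∘ a. -/
namespace Paper

/-- An applicative structure with distinguished elements `B`, `C⁺`, `C⁻`, `I`. -/
structure BCStruct (α : Type*) where
  ap : α → α → α
  B : α
  Cp : α
  Cm : α
  I : α

namespace BCStruct

variable {α : Type*}

/-- `a ∘ b := B a b`. -/
def comp (S : BCStruct α) (a b : α) : α := S.ap (S.ap S.B a) b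

/-- Powers: `a⁰ = I`, `a^(n+1) = a ∘ aⁿ`. -/
def pow (S : BCStruct α) (a : α) : ℕ → α
  | 0 => S.I
  | n + 1 => S.comp a (S.pow a n)

/-- `a• := C⁺ I a`. -/
def bul (S : BCStruct α) (a : α) : α := S.ap (S.ap S.Cp S.I) a

/-- `a` has arity `m → n` iff `(C⁺ B a) ∘ Bᵐ = (B a) ∘ Bⁿ`. -/
def hasArity (S : BCStruct α) (a : α) (m n : ℕ) : Prop :=
  S.comp (S.ap (S.ap S.Cp S.B) a) (S.pow S.B m) = S.comp (S.ap S.B a) (S.pow S.B n)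

/-- The axioms of an extensional BC±I-algebra. -/
structure IsExt (S : BCStruct α) : Prop where
  hB : ∀ a b c, S.ap (S.ap (S.ap S.B a) b) c = S.ap a (S.ap b c)
  hCp : ∀ a b c, S.ap (S.ap (S.ap S.Cp a) b) c = S.ap (S.ap a c) b
  hCm : ∀ a b c, S.ap (S.ap (S.ap S.Cm a) b) c = S.ap (S.ap a c) b
  hI : ∀ a, S.ap S.I a = a
  hC2 : ∀ a b, S.ap (S.ap S.Cp a) b = S.ap (S.ap S.Cm a) b
  hLam : S.ap S.B S.I = S.I
  hRho : S.ap (S.ap S.Cp S.B) S.I = S.ap S.B S.I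
  hAlpha : S.comp (S.ap (S.ap S.Cp S.B) S.B) (S.comp S.B S.B) = S.comp (S.ap S.B S.B) S.B
  hCox1p : S.comp S.Cp S.Cm = S.ap S.B (S.ap S.B S.I)
  hCox1m : S.comp S.Cm S.Cp = S.ap S.B (S.ap S.B S.I)
  hCox2p : S.comp (S.ap (S.ap S.Cp S.B) S.Cp) (S.comp S.B S.B)
      = S.comp (S.ap S.B S.Cp) (S.comp S.B S.B)
  hCox2m : S.comp (S.ap (S.ap S.Cp S.B) S.Cm) (S.comp S.B S.B)
      = S.comp (S.ap S.B S.Cm) (S.comp S.B S.B)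
  hCox3p : S.comp (S.ap S.B S.Cp) (S.comp S.Cp (S.ap S.B S.Cp))
      = S.comp S.Cp (S.comp (S.ap S.B S.Cp) S.Cp)
  hCox3m : S.comp (S.ap S.B S.Cm) (S.comp S.Cm (S.ap S.B S.Cm))
      = S.comp S.Cm (S.comp (S.ap S.B S.Cm) S.Cm)
  hBCp : S.comp (S.ap S.B S.B) S.Cp = S.comp S.Cp (S.comp (S.ap S.B S.Cp) S.B)
  hBCm : S.comp (S.ap S.B S.B) S.Cm = S.comp S.Cm (S.comp (S.ap S.B S.Cm) S.B)

/-- The axioms for twists `θ⁺ = tp`, `θ⁻ = tm` making the algebra balanced. -/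
structure IsBalanced (S : BCStruct α) (tp tm : α) : Prop where
  arP : S.comp (S.ap S.B tp) S.B = S.comp (S.ap (S.ap S.Cp S.B) tp) S.B
  arM : S.comp (S.ap S.B tm) S.B = S.comp (S.ap (S.ap S.Cp S.B) tm) S.B
  invPM : S.comp tp tm = S.ap S.B S.I
  invMP : S.comp tm tp = S.ap S.B S.I
  natBulP : ∀ a, S.ap (S.ap S.Cp tp) a = S.ap (S.ap S.Cp S.I) a
  natBulM : ∀ a, S.ap (S.ap S.Cp tm) a = S.ap (S.ap S.Cp S.I) a
  natBP : S.comp S.B tp = S.comp tp (S.comp S.Cp (S.comp tp (S.comp S.Cp S.B)))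
  natBM : S.comp S.B tm = S.comp tm (S.comp S.Cm (S.comp tm (S.comp S.Cm S.B)))

/-- The axioms for a trace combinator `Tr` (Left/Right Tightening, Yanking, Exchange). -/
structure IsTrace (S : BCStruct α) (tp tm Tr : α) : Prop where
  leftT : S.comp (S.ap (S.ap S.Cp S.B) Tr) S.B = S.comp (S.ap S.B Tr) (S.pow S.B 2)
  rightT : S.comp (S.ap S.B Tr) (S.comp (S.ap (S.ap S.Cp S.B) S.B) S.B) = S.comp S.B Tr
  yankP : S.ap Tr S.Cp = tp
  yankM : S.ap Tr S.Cm = tm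
  exch : S.comp (S.comp (S.comp Tr Tr) (S.ap (S.ap S.Cp S.B) S.Cm)) (S.ap S.B S.Cp)
      = S.comp Tr Tr

/-- A duality: `α• ∘ B = (B α) ∘ B²`, `β• ∘ B³ = B β`, `α ∘ (B β) = B I`,
`(B α) ∘ β = B I`. -/
structure IsDuality (S : BCStruct α) (al be : α) : Prop where
  arAl : S.comp (S.bul al) S.B = S.comp (S.ap S.B al) (S.pow S.B 2)
  arBe : S.comp (S.bul be) (S.pow S.B 3) = S.ap S.B be
  d1 : S.comp al (S.ap S.B be) = S.ap S.B S.I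
  d2 : S.comp (S.ap S.B al) be = S.ap S.B S.I

/-- A ribbon structure: a duality compatible with the twists. -/
structure IsRibbon (S : BCStruct α) (tp tm al be : α) : Prop where
  dual : IsDuality S al be
  dTp : S.comp al tp = S.comp al (S.ap S.B tp)
  dTm : S.comp al tm = S.comp al (S.ap S.B tm)

end BCStruct

end Paper

/-!
An element `a` of arity `1 → 1` acts by precomposition: `a = C⁺ B d` with `d = a I`. In
`a ∘ θ = C⁺ (B ∘ θ) d` expand `B ∘ θ = θ ∘ C⁺ ∘ θ ∘ C⁺ ∘ B`. The outer `θ` is absorbed by the closed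
element `d`, and the inner one slides to the left through `C⁺` and out of the expression. What
remains, `C⁺ (C⁺ ∘ C⁺ ∘ B) d`, is a double crossing with the strand of `d`. Comparing the axioms for
`B B ∘ C⁺` and `B B ∘ C⁻` shows that a crossing with a closed element may change sign, so the two
crossings cancel. The statement for `θ⁻` is the mirror image.
-/

namespace Paper.BCStruct

variable {α : Type*} {S : BCStruct α} {a θ tp tm : α} {m n : ℕ}

/-- The mirror image of an algebra, in which positive and negative crossings `C⁺`, `C⁻` are
exchanged. It reduces statements about `C⁻` and `θ⁻` to those about `C⁺` and `θ⁺`. -/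
def mirror (S : BCStruct α) : BCStruct α where
  ap := S.ap
  B := S.B
  Cp := S.Cm
  Cm := S.Cp
  I := S.I

/-- A twist for the positive crossing `C⁺`: the axioms that a balanced algebra imposes on `θ⁺`,
except for the existence of an inverse. A negative twist is encoded as a twist of `S.mirror`. -/
structure IsTwist (S : BCStruct α) (θ : α) : Prop where
  hasArity : S.hasArity θ 1 1
  Cp_apply : ∀ x, S.ap (S.ap S.Cp θ) x = S.ap (S.ap S.Cp S.I) x
  B_comp : S.comp S.B θ = S.comp θ (S.comp S.Cp (S.comp θ (S.comp S.Cp S.B)))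

theorem IsExt.mirror (hS : S.IsExt) : S.mirror.IsExt where
  hB := hS.hB
  hCp := hS.hCm
  hCm := hS.hCp
  hI := hS.hI
  hC2 x y := (hS.hC2 x y).symm
  hLam := hS.hLam
  hRho := hS.hC2 S.B S.I ▸ hS.hRho
  hAlpha := hS.hC2 S.B S.B ▸ hS.hAlpha
  hCox1p := hS.hCox1m
  hCox1m := hS.hCox1p
  hCox2p := hS.hC2 S.B S.Cm ▸ hS.hCox2m
  hCox2m := hS.hC2 S.B S.Cp ▸ hS.hCox2p
  hCox3p := hS.hCox3m
  hCox3m := hS.hCox3p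
  hBCp := hS.hBCm
  hBCm := hS.hBCp

theorem pow_mirror (S : BCStruct α) (x : α) (n : ℕ) : S.mirror.pow x n = S.pow x n := by
  induction n with
  | zero => rfl
  | succ n ih => exact congrArg (S.comp x) ih

theorem hasArity.mirror (h : S.hasArity a m n) (hS : S.IsExt) : S.mirror.hasArity a m n := by
  unfold hasArity at h ⊢
  rw [pow_mirror, pow_mirror]
  exact hS.hC2 S.B a ▸ h

section Combinators

local infixl:100 "⬝" => BCStruct.ap S
local infixr:80 "⊚" => BCStruct.comp S
local notation "𝐁" => BCStruct.B S
local notation "𝐂⁺" => BCStruct.Cp S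
local notation "𝐂⁻" => BCStruct.Cm S
local notation "𝐈" => BCStruct.I S

namespace IsExt

theorem comp_I (hS : S.IsExt) (x : α) : x ⊚ 𝐈 = x := by
  have h := congrArg (· ⬝ x) hS.hRho
  simpa only [comp, hS.hCp, hS.hLam, hS.hI] using h

theorem I_comp (hS : S.IsExt) (x : α) : 𝐈 ⊚ x = x := by
  rw [comp, hS.hLam, hS.hI]

theorem B_apply_comp (hS : S.IsExt) (x y : α) : 𝐁 ⬝ (x ⊚ y) = 𝐁 ⬝ x ⊚ 𝐁 ⬝ y := by
  have h := congrArg (· ⬝ x ⬝ y) hS.hAlpha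
  simpa only [comp, hS.hCp, hS.hB] using h.symm

theorem comp_assoc (hS : S.IsExt) (x y z : α) : (x ⊚ y) ⊚ z = x ⊚ y ⊚ z := by
  have h := congrArg (· ⬝ z) (hS.B_apply_comp x y)
  simpa only [comp, hS.hB] using h

theorem Cp_comp_Cm (hS : S.IsExt) : 𝐂⁺ ⊚ 𝐂⁻ = 𝐈 := by
  rw [hS.hCox1p, hS.hLam, hS.hLam]

theorem Cm_comp_Cp (hS : S.IsExt) : 𝐂⁻ ⊚ 𝐂⁺ = 𝐈 :=
  hS.mirror.Cp_comp_Cm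

theorem Cp_B_comp_apply (hS : S.IsExt) (x y z : α) :
    𝐂⁺ ⬝ (𝐁 ⬝ x ⊚ y) ⬝ z = x ⊚ 𝐂⁺ ⬝ y ⬝ z := by
  have h := congrArg (· ⬝ x ⬝ y ⬝ z) hS.hCox2p
  simpa only [comp, hS.hCp, hS.hB] using h.symm

theorem B_Cp_apply (hS : S.IsExt) (x y : α) :
    𝐁 ⬝ (𝐂⁺ ⬝ x ⬝ y) = 𝐂⁺ ⬝ (𝐂⁺ ⊚ 𝐁 ⬝ x) ⬝ y := by
  have h := congrArg (· ⬝ x ⬝ y) hS.hBCp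
  simpa only [comp, hS.hB] using h

theorem B_Cp_apply_eq_Cm (hS : S.IsExt) (x y : α) :
    𝐁 ⬝ (𝐂⁺ ⬝ x ⬝ y) = 𝐂⁺ ⬝ (𝐂⁻ ⊚ 𝐁 ⬝ x) ⬝ y := by
  rw [hS.hC2, hS.hC2]
  exact hS.mirror.B_Cp_apply x y

theorem Cp_apply_comp (hS : S.IsExt) (x y z : α) : 𝐂⁺ ⬝ x ⬝ y ⊚ z = 𝐂⁺ ⬝ (x ⊚ z) ⬝ y := by
  have h := congrArg (· ⬝ z) (hS.B_Cp_apply x y)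
  simpa only [comp, hS.hB, hS.hCp] using h

theorem Cp_Cp_apply (hS : S.IsExt) (x : α) : 𝐂⁺ ⬝ 𝐂⁺ ⬝ x = 𝐂⁺ ⬝ 𝐂⁻ ⬝ x := by
  have h := (hS.B_Cp_apply 𝐈 x).symm.trans (hS.B_Cp_apply_eq_Cm 𝐈 x)
  simpa only [hS.hLam, hS.comp_I] using h

theorem B_Cp_comp_B (hS : S.IsExt) : 𝐁 ⬝ 𝐂⁺ ⊚ 𝐁 = 𝐂⁻ ⊚ 𝐁 ⬝ 𝐁 ⊚ 𝐂⁺ := by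
  rw [hS.hBCp, ← hS.comp_assoc, hS.Cm_comp_Cp, hS.I_comp]

theorem B_comp_Cm (hS : S.IsExt) : 𝐁 ⊚ 𝐂⁻ = 𝐁 ⬝ 𝐂⁻ ⊚ 𝐂⁻ ⊚ 𝐁 ⬝ 𝐁 :=
  calc 𝐁 ⊚ 𝐂⁻ = 𝐁 ⬝ (𝐂⁻ ⊚ 𝐂⁺) ⊚ 𝐁 ⊚ 𝐂⁻ := by rw [hS.Cm_comp_Cp, hS.hLam, hS.I_comp]
    _ = 𝐁 ⬝ 𝐂⁻ ⊚ (𝐁 ⬝ 𝐂⁺ ⊚ 𝐁) ⊚ 𝐂⁻ := by simp only [hS.B_apply_comp, hS.comp_assoc]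
    _ = 𝐁 ⬝ 𝐂⁻ ⊚ 𝐂⁻ ⊚ 𝐁 ⬝ 𝐁 ⊚ 𝐂⁺ ⊚ 𝐂⁻ := by simp only [hS.B_Cp_comp_B, hS.comp_assoc]
    _ = 𝐁 ⬝ 𝐂⁻ ⊚ 𝐂⁻ ⊚ 𝐁 ⬝ 𝐁 := by rw [hS.Cp_comp_Cm, hS.comp_I]

theorem Cp_apply_apply (hS : S.IsExt) (x y z : α) :
    𝐂⁺ ⬝ x ⬝ (y ⬝ z) = 𝐂⁺ ⬝ (𝐂⁺ ⬝ (𝐁 ⊚ x) ⬝ y) ⬝ z := by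
  have h := congrArg (· ⬝ x ⬝ y ⬝ z) hS.B_comp_Cm
  simpa only [comp, hS.hB, ← hS.hC2] using h

theorem hasArity_one_one_iff (hS : S.IsExt) :
    S.hasArity a 1 1 ↔ 𝐂⁺ ⬝ 𝐁 ⬝ a ⊚ 𝐁 = 𝐁 ⬝ a ⊚ 𝐁 := by
  simp only [hasArity, pow, hS.comp_I]

theorem eq_Cp_B_of_hasArity (hS : S.IsExt) (ha : S.hasArity a 1 1) : a = 𝐂⁺ ⬝ 𝐁 ⬝ (a ⬝ 𝐈) :=
  calc a = 𝐂⁺ ⬝ (𝐁 ⬝ a ⊚ 𝐁) ⬝ 𝐈 := by rw [hS.Cp_B_comp_apply, hS.hRho, hS.hLam, hS.comp_I]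
    _ = 𝐂⁺ ⬝ (𝐂⁺ ⬝ 𝐁 ⬝ a ⊚ 𝐁) ⬝ 𝐈 := by rw [hS.hasArity_one_one_iff.1 ha]
    _ = 𝐂⁺ ⬝ 𝐁 ⬝ (a ⬝ 𝐈) := by rw [hS.Cp_apply_comp, ← hS.Cp_apply_apply]

theorem Cp_comp_Cp_B (hS : S.IsExt) (x : α) :
    𝐂⁺ ⊚ 𝐂⁺ ⬝ 𝐁 ⬝ x = 𝐁 ⬝ (𝐂⁺ ⬝ 𝐁 ⬝ x) ⊚ 𝐂⁺ :=
  calc 𝐂⁺ ⊚ 𝐂⁺ ⬝ 𝐁 ⬝ x = 𝐂⁺ ⬝ (𝐁 ⬝ 𝐂⁺ ⊚ 𝐁) ⬝ x := (hS.Cp_B_comp_apply _ _ _).symm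
    _ = 𝐂⁺ ⬝ ((𝐂⁻ ⊚ 𝐁 ⬝ 𝐁) ⊚ 𝐂⁺) ⬝ x := by rw [hS.B_Cp_comp_B, hS.comp_assoc]
    _ = 𝐂⁺ ⬝ (𝐂⁻ ⊚ 𝐁 ⬝ 𝐁) ⬝ x ⊚ 𝐂⁺ := (hS.Cp_apply_comp _ _ _).symm
    _ = 𝐁 ⬝ (𝐂⁺ ⬝ 𝐁 ⬝ x) ⊚ 𝐂⁺ := by rw [← hS.B_Cp_apply_eq_Cm]

theorem Cp_comp_of_hasArity (hS : S.IsExt) (ha : S.hasArity a 1 1) : 𝐂⁺ ⊚ a = 𝐁 ⬝ a ⊚ 𝐂⁺ := by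
  rw [hS.eq_Cp_B_of_hasArity ha, hS.Cp_comp_Cp_B]

theorem Cp_comp_apply_of_hasArity (hS : S.IsExt) (ha : S.hasArity a 1 1) (x y : α) :
    𝐂⁺ ⬝ (a ⊚ x) ⬝ y = 𝐂⁺ ⬝ x ⬝ (a ⬝ 𝐈 ⬝ y) :=
  calc 𝐂⁺ ⬝ (a ⊚ x) ⬝ y = 𝐂⁺ ⬝ (𝐂⁺ ⬝ 𝐁 ⬝ (a ⬝ 𝐈) ⊚ x) ⬝ y := by rw [← hS.eq_Cp_B_of_hasArity ha]
    _ = 𝐂⁺ ⬝ (𝐂⁺ ⬝ (𝐁 ⊚ x) ⬝ (a ⬝ 𝐈)) ⬝ y := by rw [hS.Cp_apply_comp]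
    _ = 𝐂⁺ ⬝ x ⬝ (a ⬝ 𝐈 ⬝ y) := (hS.Cp_apply_apply _ _ _).symm

theorem Cp_Cp_comp_Cp_comp_apply (hS : S.IsExt) (x y : α) :
    𝐂⁺ ⬝ (𝐂⁺ ⊚ 𝐂⁺ ⊚ x) ⬝ y = 𝐂⁺ ⬝ x ⬝ y := by
  rw [← hS.Cp_apply_comp, hS.Cp_Cp_apply, hS.Cp_apply_comp, ← hS.comp_assoc, hS.Cm_comp_Cp,
    hS.I_comp]

end IsExt

namespace IsTwist

theorem apply_I_apply (hθ : S.IsTwist θ) (hS : S.IsExt) (x : α) : θ ⬝ 𝐈 ⬝ x = x := by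
  have h := congrArg (· ⬝ 𝐈) (hθ.Cp_apply x)
  simpa only [hS.hCp, hS.hI] using h

theorem Cp_comp_apply (hθ : S.IsTwist θ) (hS : S.IsExt) (x y : α) :
    𝐂⁺ ⬝ (θ ⊚ x) ⬝ y = 𝐂⁺ ⬝ x ⬝ y := by
  rw [hS.Cp_comp_apply_of_hasArity hθ.hasArity, hθ.apply_I_apply hS]

theorem Cp_B_apply_comp (hθ : S.IsTwist θ) (hS : S.IsExt) (x : α) :
    𝐂⁺ ⬝ 𝐁 ⬝ x ⊚ θ = θ ⊚ 𝐂⁺ ⬝ 𝐁 ⬝ x :=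
  calc 𝐂⁺ ⬝ 𝐁 ⬝ x ⊚ θ = 𝐂⁺ ⬝ (𝐁 ⊚ θ) ⬝ x := hS.Cp_apply_comp _ _ _
    _ = 𝐂⁺ ⬝ (θ ⊚ 𝐂⁺ ⊚ θ ⊚ 𝐂⁺ ⊚ 𝐁) ⬝ x := by rw [hθ.B_comp]
    _ = 𝐂⁺ ⬝ (𝐂⁺ ⊚ θ ⊚ 𝐂⁺ ⊚ 𝐁) ⬝ x := hθ.Cp_comp_apply hS _ _
    _ = 𝐂⁺ ⬝ (𝐁 ⬝ θ ⊚ 𝐂⁺ ⊚ 𝐂⁺ ⊚ 𝐁) ⬝ x := by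
      rw [← hS.comp_assoc, hS.Cp_comp_of_hasArity hθ.hasArity, hS.comp_assoc]
    _ = θ ⊚ 𝐂⁺ ⬝ (𝐂⁺ ⊚ 𝐂⁺ ⊚ 𝐁) ⬝ x := hS.Cp_B_comp_apply _ _ _
    _ = θ ⊚ 𝐂⁺ ⬝ 𝐁 ⬝ x := by rw [hS.Cp_Cp_comp_Cp_comp_apply]

end IsTwist

end Combinators

namespace IsBalanced

theorem mirror (h : S.IsBalanced tp tm) (hS : S.IsExt) : S.mirror.IsBalanced tm tp where
  arP := hS.hC2 S.B tm ▸ h.arM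
  arM := hS.hC2 S.B tp ▸ h.arP
  invPM := h.invMP
  invMP := h.invPM
  natBulP x := ((hS.hC2 tm x).symm.trans (h.natBulM x)).trans (hS.hC2 S.I x)
  natBulM x := ((hS.hC2 tp x).symm.trans (h.natBulP x)).trans (hS.hC2 S.I x)
  natBP := h.natBM
  natBM := h.natBP

theorem isTwist (h : S.IsBalanced tp tm) (hS : S.IsExt) : S.IsTwist tp where
  hasArity := hS.hasArity_one_one_iff.2 h.arP.symm
  Cp_apply := h.natBulP
  B_comp := h.natBP

end IsBalanced

end Paper.BCStruct

theorem stmt_13_general {α : Type*} {S : Paper.BCStruct α} (hS : S.IsExt) {θ a : α}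
    (hθ : S.IsTwist θ) (ha : S.hasArity a 1 1) : S.comp a θ = S.comp θ a := by
  rw [hS.eq_Cp_B_of_hasArity ha, hθ.Cp_B_apply_comp hS]

/-- The twist is natural on elements of arity `1 → 1`. -/
theorem stmt_13 {α : Type*} (S : Paper.BCStruct α) (hS : S.IsExt)
    {tp tm : α} (hBal : S.IsBalanced tp tm) {a : α} (h : S.hasArity a 1 1) :
    S.comp a tp = S.comp tp a ∧ S.comp a tm = S.comp tm a :=
  ⟨stmt_13_general hS (hBal.isTwist hS) h,
    stmt_13_general hS.mirror ((hBal.mirror hS).isTwist hS.mirror) (h.mirror hS)⟩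
end

section
/- Every traced balanced extensional BC±I-algebra has a duality: the elements α := Tr (Tr ∘ (B Tr) ∘ (B C⁺) ∘ C⁺) and β := Tr (C⁺ ∘ (B C⁺) ∘ (B B) ∘ B) satisfy α• ∘ B = (B α) ∘ B², β• ∘ B³ = B β, α ∘ (B β) = B I, and (B α) ∘ β = B I, where a• := C⁺ I a. -/
/-!
Under `∘` the algebra is a monoid of string diagrams, in which `σ = B ·` adds a strand, `C⁺` crosses
two strands and `Tr` closes one. The elements `α` and `β` close strands of a few crossings, so their
arities follow from the fact that `Tr` lowers arities by one. A crossing passes through `α` and `β`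
at the cost of inverting it, and this turns the two zigzags `α ∘ (B β)` and `(B α) ∘ β` into closed
loops containing a factor conjugated by the twist. Moving a twist around the trace (an instance of
Exchange) identifies the two loops. Exchange and the naturality of the twist at `B` then remove the
conjugation, and the loop `Tr (C⁻ ∘ B ∘ Tr ∘ C⁺)` that remains is `I`.
-/

namespace Paper

section Braiding

variable {M : Type*} [Monoid M] {σ : M →* M} {c : Mˣ}

/-- A braiding for an endomorphism `σ` of a monoid. Reading the elements of `M` as diagrams and `σ`
as the operation that adds a strand, `c` is the crossing of two strands. -/
structure IsBraiding (σ : M →* M) (c : Mˣ) : Prop where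
  commute_shift_shift (f : M) : Commute (σ (σ f)) c
  yang_baxter : σ c * c * σ c = c * σ c * c

namespace IsBraiding

theorem inv (h : IsBraiding σ c) : IsBraiding σ c⁻¹ where
  commute_shift_shift f := (h.commute_shift_shift f).units_inv_right
  yang_baxter := by
    have units_eq : Units.map σ c * c * Units.map σ c = c * Units.map σ c * c :=
      Units.ext h.yang_baxter
    have inv_eq := congrArg (fun u : Mˣ ↦ ((u⁻¹ : Mˣ) : M)) units_eq
    simp only [mul_inv_rev, ← mul_assoc] at inv_eq
    exact inv_eq

theorem shift_mul_mul_shift_inv (h : IsBraiding σ c) :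
    σ c * c * σ ↑c⁻¹ = ↑c⁻¹ * σ c * c := by
  have conj : SemiconjBy (σ c * c) (Units.map σ c : Mˣ) c :=
    h.yang_baxter.trans (mul_assoc _ _ _)
  exact conj.units_inv_right.eq.trans (mul_assoc _ _ _).symm

theorem mul_shift_mul_inv (h : IsBraiding σ c) :
    ↑c * σ c * ↑c⁻¹ = σ ↑c⁻¹ * c * σ c := by
  have conj : SemiconjBy (c * σ c) c (Units.map σ c : Mˣ) :=
    h.yang_baxter.symm.trans (mul_assoc _ _ _)
  exact conj.units_inv_right.eq.trans (mul_assoc _ _ _).symm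

theorem inv_mul_shift_inv_mul (h : IsBraiding σ c) :
    ↑c⁻¹ * σ ↑c⁻¹ * c = σ c * ↑c⁻¹ * σ ↑c⁻¹ := by
  simpa only [inv_inv] using h.inv.mul_shift_mul_inv

theorem mul_shift_inv_mul_inv (h : IsBraiding σ c) :
    ↑c * σ ↑c⁻¹ * ↑c⁻¹ = σ ↑c⁻¹ * ↑c⁻¹ * σ c := by
  simpa only [inv_inv] using h.inv.shift_mul_mul_shift_inv.symm

end IsBraiding

end Braiding

section BalancedTrace

variable {M : Type*} [Monoid M] {σ : M →* M} {c θ : Mˣ} {T : M → M}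

/-- A balanced trace for a braiding: `T` closes the strand added by `σ`, and closing a crossing
produces a full twist `θ`. -/
structure IsBalancedTrace (σ : M →* M) (c θ : Mˣ) (T : M → M) : Prop extends IsBraiding σ c where
  trace_shift_mul (f a : M) : T (σ f * a) = f * T a
  trace_mul_shift (a g : M) : T (a * σ g) = T a * g
  trace_conj (f : M) : T (c * σ f * ↑c⁻¹) = σ (T f)
  trace_conj_inv (f : M) : T (↑c⁻¹ * σ f * c) = σ (T f)
  trace_trace_conj (x : M) : T (T (c * x * ↑c⁻¹)) = T (T x)
  trace_braid : T c = θ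
  trace_braid_inv : T ↑c⁻¹ = ↑θ⁻¹

namespace IsBalancedTrace

theorem commute_shift_twist (h : IsBalancedTrace σ c θ T) (f : M) : Commute (σ f) θ := by
  rw [Commute, SemiconjBy, ← h.trace_braid, ← h.trace_shift_mul, (h.commute_shift_shift f).eq,
    h.trace_mul_shift]

theorem shift_twist_eq_conj_inv (h : IsBalancedTrace σ c θ T) : σ θ = ↑c⁻¹ * θ * c := by
  rw [← h.trace_braid, ← h.trace_conj, h.mul_shift_mul_inv, mul_assoc, h.trace_shift_mul,
    h.trace_mul_shift, mul_assoc]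

theorem shift_twist_eq_conj (h : IsBalancedTrace σ c θ T) : σ θ = c * θ * ↑c⁻¹ := by
  rw [← h.trace_braid, ← h.trace_conj_inv, ← h.shift_mul_mul_shift_inv, h.trace_mul_shift,
    h.trace_shift_mul]

theorem twist_mul_braid (h : IsBalancedTrace σ c θ T) : θ * c = c * σ θ := by
  rw [h.shift_twist_eq_conj_inv, mul_assoc, Units.mul_inv_cancel_left]

theorem braid_mul_twist (h : IsBalancedTrace σ c θ T) : c * θ = σ θ * c := by
  rw [h.shift_twist_eq_conj, Units.inv_mul_cancel_right]

theorem twist_inv_mul_braid (h : IsBalancedTrace σ c θ T) : ↑θ⁻¹ * c = c * σ ↑θ⁻¹ := by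
  have conj : SemiconjBy (c : M) (Units.map σ θ : Mˣ) θ := h.twist_mul_braid.symm
  exact conj.units_inv_right.eq.symm

theorem braid_mul_twist_inv (h : IsBalancedTrace σ c θ T) : c * ↑θ⁻¹ = σ ↑θ⁻¹ * c := by
  have conj : SemiconjBy (c : M) θ (Units.map σ θ : Mˣ) := h.braid_mul_twist
  exact conj.units_inv_right.eq

theorem trace_twist_mul (h : IsBalancedTrace σ c θ T) (a : M) : T (θ * a) = T (a * θ) := by
  have exchange := h.trace_trace_conj (σ a * c)
  rwa [← mul_assoc, Units.mul_inv_cancel_right, h.trace_mul_shift, h.trace_shift_mul,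
    h.trace_braid] at exchange

theorem trace_twist_inv_mul (h : IsBalancedTrace σ c θ T) (a : M) :
    T (↑θ⁻¹ * a) = T (a * ↑θ⁻¹) := by
  have cyclic := h.trace_twist_mul (↑θ⁻¹ * a * ↑θ⁻¹)
  rw [mul_assoc, Units.mul_inv_cancel_left, ← mul_assoc, Units.inv_mul_cancel_right] at cyclic
  exact cyclic.symm

end IsBalancedTrace

end BalancedTrace

section ExtensionalMonoid

variable {M : Type*} [Monoid M] {σ : M →* M} {ap : M → M → M} {bul : M → M} {B : M} {C : Mˣ}

/-- `x` has arity `k → n`: the paper's `(C⁺ B x) ∘ Bᵏ = (B x) ∘ Bⁿ`, written in the composition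
monoid, where `C⁺ B x = bul x * B`. -/
def HasArity (σ : M →* M) (bul : M → M) (B x : M) (k n : ℕ) : Prop :=
  bul x * B * B ^ k = σ x * B ^ n

/-- The axioms of an extensional BC±I-algebra in terms of its composition monoid `M`: `ap` is
application, `σ = B ·` adds a strand, `bul` is `a ↦ a•`, and `C`, `C⁻¹` are `C⁺`, `C⁻`. -/
structure IsExtMonoid (ap : M → M → M) (σ : M →* M) (bul : M → M) (B : M) (C : Mˣ) : Prop where
  ap_one (a : M) : ap 1 a = a
  ap_mul (a b x : M) : ap (a * b) x = ap a (ap b x)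
  ap_B (x : M) : ap B x = σ x
  ap_shift (a b : M) : ap (σ a) b = a * b
  ap_bul (x a : M) : ap (bul x) a = ap a x
  ap_ap_braid (a b : M) : ap (ap C a) b = bul b * a
  ap_ap_braid_inv (a b : M) : ap (ap ↑C⁻¹ a) b = bul b * a
  bul_one_mul_B : bul 1 * B = 1
  hasArity_B : HasArity σ bul B B 2 1
  hasArity_braid : HasArity σ bul B C 2 2
  hasArity_braid_inv : HasArity σ bul B ↑C⁻¹ 2 2
  yang_baxter : σ C * C * σ C = C * σ C * C
  shift_B_mul_braid : σ B * C = C * σ C * B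
  shift_B_mul_braid_inv : σ B * ↑C⁻¹ = ↑C⁻¹ * σ ↑C⁻¹ * B

namespace IsExtMonoid

theorem ap_bul_mul_B (h : IsExtMonoid ap σ bul B C) (x y : M) : ap (bul x * B) y = y * x := by
  rw [h.ap_mul, h.ap_bul, h.ap_B, h.ap_shift]

theorem ap_B_pow (h : IsExtMonoid ap σ bul B C) (k : ℕ) (f : M) : ap (B ^ k) f = σ^[k] f := by
  induction k generalizing f with
  | zero => rw [pow_zero, h.ap_one, Function.iterate_zero_apply]
  | succ k ih => rw [pow_succ, h.ap_mul, h.ap_B, ih, Function.iterate_succ_apply]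

theorem shift_iterate_mul (h : IsExtMonoid ap σ bul B C) {x : M} {k n : ℕ}
    (hx : HasArity σ bul B x k n) (f : M) : σ^[k] f * x = x * σ^[n] f := by
  have applied := congrArg (ap · f) hx
  rwa [h.ap_mul, h.ap_bul_mul_B, h.ap_mul, h.ap_shift, h.ap_B_pow, h.ap_B_pow] at applied

theorem isBraiding (h : IsExtMonoid ap σ bul B C) : IsBraiding σ C where
  commute_shift_shift := h.shift_iterate_mul h.hasArity_braid
  yang_baxter := h.yang_baxter

theorem inv (h : IsExtMonoid ap σ bul B C) : IsExtMonoid ap σ bul B C⁻¹ where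
  __ := h
  ap_ap_braid := h.ap_ap_braid_inv
  ap_ap_braid_inv := by simpa only [inv_inv] using h.ap_ap_braid
  hasArity_braid := h.hasArity_braid_inv
  hasArity_braid_inv := by simpa only [inv_inv] using h.hasArity_braid
  yang_baxter := h.isBraiding.inv.yang_baxter
  shift_B_mul_braid := h.shift_B_mul_braid_inv
  shift_B_mul_braid_inv := by simpa only [inv_inv] using h.shift_B_mul_braid

theorem shift_shift_mul_braid (h : IsExtMonoid ap σ bul B C) (f : M) :
    σ (σ f) * C = C * σ (σ f) :=
  h.shift_iterate_mul h.hasArity_braid f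

theorem shift_shift_mul_braid_inv (h : IsExtMonoid ap σ bul B C) (f : M) :
    σ (σ f) * ↑C⁻¹ = ↑C⁻¹ * σ (σ f) :=
  h.inv.shift_shift_mul_braid f

theorem shift_shift_mul_B (h : IsExtMonoid ap σ bul B C) (f : M) : σ (σ f) * B = B * σ f :=
  h.shift_iterate_mul h.hasArity_B f

theorem braid_mul_shift_B (h : IsExtMonoid ap σ bul B C) : C * σ B = σ ↑C⁻¹ * B * C := by
  rw [← Units.mul_inv_eq_iff_eq_mul, mul_assoc, h.shift_B_mul_braid_inv, ← mul_assoc, ← mul_assoc,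
    Units.mul_inv, one_mul]

theorem B_mul_braid (h : IsExtMonoid ap σ bul B C) : B * C = σ C * C * σ B := by
  rw [mul_assoc, h.braid_mul_shift_B, ← mul_assoc, ← mul_assoc, ← map_mul, Units.mul_inv, map_one,
    one_mul]

theorem B_mul_ap_braid (h : IsExtMonoid ap σ bul B C) (a : M) :
    B * ap C a = ap C (C * σ a) := by
  have applied := congrArg (ap · a) h.shift_B_mul_braid
  simpa only [h.ap_mul, h.ap_shift, h.ap_B] using applied

theorem ap_braid_shift_mul (h : IsExtMonoid ap σ bul B C) (f a : M) :
    ap C (σ f * a) = σ f * ap C a := by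
  have applied := congrArg (ap · a) (h.shift_shift_mul_braid f)
  simpa only [h.ap_mul, h.ap_shift] using applied.symm

theorem ap_braid_one (h : IsExtMonoid ap σ bul B C) (b : M) : ap (ap C 1) b = bul b := by
  rw [h.ap_ap_braid, mul_one]

theorem mul_bul (h : IsExtMonoid ap σ bul B C) (f b : M) : f * bul b = bul b * σ f := by
  rw [← h.ap_ap_braid, ← mul_one (σ f), h.ap_braid_shift_mul, h.ap_mul, h.ap_shift,
    h.ap_braid_one]

theorem ap_braid_braid (h : IsExtMonoid ap σ bul B C) : ap C C = B * ap C 1 := by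
  rw [h.B_mul_ap_braid, map_one, mul_one]

theorem shift_bul (h : IsExtMonoid ap σ bul B C) (b : M) : σ (bul b) = bul b * C := by
  rw [← h.ap_ap_braid, h.ap_braid_braid, h.ap_mul, h.ap_braid_one, h.ap_B]

theorem ap_braid_inv_ap_braid (h : IsExtMonoid ap σ bul B C) (a : M) : ap ↑C⁻¹ (ap C a) = a := by
  rw [← h.ap_mul, Units.inv_mul, h.ap_one]

theorem ap_braid_injective (h : IsExtMonoid ap σ bul B C) : Function.Injective (ap C) :=
  Function.LeftInverse.injective h.ap_braid_inv_ap_braid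

theorem ap_braid_mul (h : IsExtMonoid ap σ bul B C) (a x : M) :
    ap C (a * x) = bul x * B * ap C a := by
  rw [mul_assoc, ← h.ap_ap_braid_inv, h.B_mul_ap_braid, h.ap_braid_inv_ap_braid, h.ap_mul,
    h.ap_shift]

theorem ap_braid (h : IsExtMonoid ap σ bul B C) (x : M) : ap C x = bul x * B * ap C 1 := by
  rw [← h.ap_braid_mul, one_mul]

theorem braid_mul_shift (h : IsExtMonoid ap σ bul B C) (a : M) :
    C * σ a = bul (ap C a) * B * ap ↑C⁻¹ B := by
  rw [← h.inv.ap_braid_mul, h.B_mul_ap_braid, h.ap_braid_inv_ap_braid]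

theorem shift_ap_braid_one (h : IsExtMonoid ap σ bul B C) : σ (ap C 1) = C * ap C B := by
  have inv_mul_shift := h.inv.braid_mul_shift (ap C 1)
  rw [h.ap_braid_inv_ap_braid, h.bul_one_mul_B, one_mul, inv_inv] at inv_mul_shift
  rw [← inv_mul_shift, Units.mul_inv_cancel_left]

theorem bul_ap (h : IsExtMonoid ap σ bul B C) (a b : M) : bul (ap a b) = bul b * bul a * B := by
  rw [← h.ap_braid_one, ← h.ap_mul, ← h.ap_shift, h.shift_ap_braid_one, h.ap_mul, h.ap_ap_braid,
    h.ap_ap_braid, mul_assoc]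

theorem bul_shift (h : IsExtMonoid ap σ bul B C) (x : M) : bul (σ x) = bul x * bul B * B := by
  rw [← h.ap_B, h.bul_ap]

theorem bul_shift_mul_B_mul_B (h : IsExtMonoid ap σ bul B C) (x : M) :
    bul (σ x) * B * B = B * bul x * B := by
  have arity_B : bul B * B * (B * B) = σ B * B := by
    simpa only [HasArity, pow_two, pow_one] using h.hasArity_B
  calc bul (σ x) * B * B
      = bul x * (bul B * B * (B * B)) := by rw [h.bul_shift]; grind
    _ = B * bul x * B := by rw [arity_B, h.mul_bul]; grind

theorem bul_mul_mul_B (h : IsExtMonoid ap σ bul B C) (x y : M) :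
    bul (x * y) * B = bul y * B * bul x * B := by
  calc bul (x * y) * B
      = bul y * (bul (σ x) * B * B) := by rw [← h.ap_shift x y, h.bul_ap]; simp only [mul_assoc]
    _ = bul y * B * bul x * B := by rw [h.bul_shift_mul_B_mul_B]; simp only [mul_assoc]

theorem bul_mul_B_mul_shift (h : IsExtMonoid ap σ bul B C) (x f : M) :
    bul x * B * σ f = σ f * bul x * B := by
  rw [h.mul_bul, mul_assoc, mul_assoc, h.shift_shift_mul_B]

theorem shift_bul_one_mul_bul_B_mul_B_mul_B (h : IsExtMonoid ap σ bul B C) :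
    σ (bul 1) * bul B * B * B = 1 := by
  have arity_C : bul C * B * (B * B) = σ C * (B * B) := by
    simpa only [HasArity, pow_two] using h.hasArity_braid
  calc σ (bul 1) * bul B * B * B
      = bul 1 * bul B * (σ C * (B * B)) := by rw [h.shift_bul]; grind [h.mul_bul C B]
    _ = bul (ap (ap C B) 1) * B := by rw [← arity_C, h.bul_ap, h.bul_ap]; simp only [mul_assoc]
    _ = 1 := by rw [h.ap_ap_braid, h.bul_one_mul_B, h.bul_one_mul_B]

end IsExtMonoid

namespace HasArity

theorem mul (h : IsExtMonoid ap σ bul B C) {x y : M} {k n l : ℕ}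
    (hx : HasArity σ bul B x k n) (hy : HasArity σ bul B y n l) :
    HasArity σ bul B (x * y) k l := by
  calc bul (x * y) * B * B ^ k
      = bul y * B * (bul x * B * B ^ k) := by rw [h.bul_mul_mul_B]; simp only [mul_assoc]
    _ = bul y * B * σ x * B ^ n := by rw [hx, ← mul_assoc]
    _ = σ x * (bul y * B * B ^ n) := by rw [h.bul_mul_B_mul_shift]; simp only [mul_assoc]
    _ = σ (x * y) * B ^ l := by rw [hy, map_mul, mul_assoc]

theorem shift (h : IsExtMonoid ap σ bul B C) {x : M} {k n : ℕ} (hx : HasArity σ bul B x k n) :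
    HasArity σ bul B (σ x) (k + 1) (n + 1) := by
  calc bul (σ x) * B * B ^ (k + 1)
      = B * (bul x * B * B ^ k) := by
        rw [pow_succ', ← mul_assoc, h.bul_shift_mul_B_mul_B]; simp only [mul_assoc]
    _ = σ (σ x) * B ^ (n + 1) := by
        rw [hx, ← mul_assoc, ← h.shift_shift_mul_B, pow_succ', mul_assoc]

theorem add_one {x : M} {k n : ℕ} (hx : HasArity σ bul B x k n) :
    HasArity σ bul B x (k + 1) (n + 1) := by
  rw [HasArity, pow_succ, pow_succ, ← mul_assoc, ← mul_assoc, hx]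

end HasArity

variable {t : M}

/-- The axioms of a trace combinator `t` over an extensional BC±I-algebra, in terms of the
composition monoid; Yanking and Exchange are left to `IsTracedBalancedMonoid`. -/
structure IsTracedMonoid (ap : M → M → M) (σ : M →* M) (bul : M → M) (B : M) (C : Mˣ) (t : M) :
    Prop extends IsExtMonoid ap σ bul B C where
  hasArity_trace : HasArity σ bul B t 1 2
  right_tightening : σ t * bul B * B * B = B * t

namespace IsTracedMonoid

theorem inv (h : IsTracedMonoid ap σ bul B C t) : IsTracedMonoid ap σ bul B C⁻¹ t where
  toIsExtMonoid := h.toIsExtMonoid.inv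
  hasArity_trace := h.hasArity_trace
  right_tightening := h.right_tightening

theorem shift_mul_trace (h : IsTracedMonoid ap σ bul B C t) (f : M) : σ f * t = t * σ (σ f) :=
  h.shift_iterate_mul h.hasArity_trace f

theorem trace_shift_mul (h : IsTracedMonoid ap σ bul B C t) (f a : M) :
    ap t (σ f * a) = f * ap t a := by
  have applied := congrArg (ap · a) (h.shift_mul_trace f)
  simpa only [h.ap_mul, h.ap_shift] using applied.symm

theorem shift_trace (h : IsTracedMonoid ap σ bul B C t) (f : M) :
    σ (ap t f) = t * σ f * B := by
  have applied := congrArg (ap · f) h.right_tightening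
  simp only [mul_assoc (σ t) (bul B), h.ap_mul (σ t * _), h.ap_mul (σ t), h.ap_mul B,
    h.ap_bul_mul_B, h.ap_shift, h.ap_B] at applied
  rw [← applied, mul_assoc]

theorem trace_mul_shift (h : IsTracedMonoid ap σ bul B C t) (a g : M) :
    ap t (a * σ g) = ap t a * g := by
  rw [← h.ap_shift (ap t a), h.shift_trace, h.ap_mul, h.ap_mul, h.ap_B, h.ap_shift]

theorem bul_trace_mul_B (h : IsTracedMonoid ap σ bul B C t) (w : M) :
    bul (ap t w) * B = t * bul w * B * B := by
  have arity_t : bul t * B * B = σ t * (B * B) := by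
    simpa only [HasArity, pow_two, pow_one] using h.hasArity_trace
  calc bul (ap t w) * B
      = bul w * (bul t * B * B) := by rw [h.bul_ap]; simp only [mul_assoc]
    _ = t * bul w * B * B := by rw [arity_t, h.mul_bul t]; simp only [mul_assoc]

theorem ap_braid_B_mul_trace (h : IsTracedMonoid ap σ bul B C t) :
    ap C B * t = σ t * bul B * B * ap C B := by
  have arity_t : bul t * B * B = σ t * (B * B) := by
    simpa only [HasArity, pow_two, pow_one] using h.hasArity_trace
  calc ap C B * t
      = bul B * B * ap (σ (ap C 1)) t := by rw [h.ap_braid B, h.ap_shift, mul_assoc]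
    _ = bul B * B * ap C (bul t * B) := by rw [h.shift_ap_braid_one, h.ap_mul, h.ap_ap_braid]
    _ = ap C (σ t * (B * B)) := by rw [← h.ap_braid_mul, arity_t]
    _ = σ t * bul B * B * ap C B := by
      rw [h.ap_braid_shift_mul, h.ap_braid_mul, ← mul_assoc, ← mul_assoc]

theorem braid_mul_trace (h : IsTracedMonoid ap σ bul B C t) : C * t = σ t * C * σ C := by
  have braid_eq : bul (ap C 1) * B * ap ↑C⁻¹ B = C := by
    rw [← h.braid_mul_shift, map_one, mul_one]
  calc C * t
      = bul (ap C 1) * B * (ap ↑C⁻¹ B * t) := by rw [← mul_assoc, braid_eq]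
    _ = bul (ap C 1) * B * σ t * bul B * B * ap ↑C⁻¹ B := by
      rw [h.inv.ap_braid_B_mul_trace]; simp only [mul_assoc]
    _ = σ t * (bul (ap C 1) * B * bul B * B) * ap ↑C⁻¹ B := by
      rw [h.bul_mul_B_mul_shift]; simp only [mul_assoc]
    _ = σ t * (bul (ap C C) * B * ap ↑C⁻¹ B) := by
      rw [h.ap_braid_braid, h.bul_mul_mul_B, mul_assoc]
    _ = σ t * C * σ C := by rw [← h.braid_mul_shift, mul_assoc]

theorem shift_trace_mul_braid (h : IsTracedMonoid ap σ bul B C t) :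
    σ t * C = C * t * σ ↑C⁻¹ := by
  rw [h.braid_mul_trace, mul_assoc, ← map_mul, Units.mul_inv, map_one, mul_one]

theorem braid_inv_mul_shift_trace (h : IsTracedMonoid ap σ bul B C t) :
    ↑C⁻¹ * σ t = t * σ ↑C⁻¹ * ↑C⁻¹ := by
  rw [Units.eq_mul_inv_iff_mul_eq, mul_assoc, h.shift_trace_mul_braid, mul_assoc,
    Units.inv_mul_cancel_left]

theorem braid_mul_shift_trace (h : IsTracedMonoid ap σ bul B C t) :
    C * σ t = t * σ C * C := by
  simpa only [inv_inv] using h.inv.braid_inv_mul_shift_trace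

theorem B_mul_trace_mul_braid (h : IsTracedMonoid ap σ bul B C t) :
    B * t * C = σ (t * C) * C * σ (bul B * B * B) := by
  calc B * t * C
      = σ t * bul B * B * (B * C) := by rw [← h.right_tightening]; simp only [mul_assoc]
    _ = σ t * bul B * (B * σ C) * C * σ B := by rw [h.B_mul_braid]; simp only [mul_assoc]
    _ = σ t * bul B * σ (σ C) * (B * C) * σ B := by
      rw [← h.shift_shift_mul_B]; simp only [mul_assoc]
    _ = σ t * (bul B * σ (σ C)) * σ C * C * σ B * σ B := by
      rw [h.B_mul_braid]; simp only [mul_assoc]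
    _ = σ t * σ C * (bul B * σ C) * C * σ B * σ B := by rw [← h.mul_bul]; simp only [mul_assoc]
    _ = σ t * σ C * C * (bul B * C) * σ B * σ B := by rw [← h.mul_bul]; simp only [mul_assoc]
    _ = σ (t * C) * C * σ (bul B * B * B) := by
      rw [← h.shift_bul]; simp only [map_mul, mul_assoc]

theorem trace_braid_inv_conj (h : IsTracedMonoid ap σ bul B C t) (f : M) :
    ap t (↑C⁻¹ * σ f * C) = σ (ap t f) := by
  apply h.ap_braid_injective
  calc ap C (ap t (↑C⁻¹ * σ f * C))
      = t * (bul (↑C⁻¹ * σ f * C) * B * ap C C) := by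
        rw [h.ap_braid, h.bul_trace_mul_B, h.ap_braid_braid]; simp only [mul_assoc]
    _ = t * ap C (σ f * C) := by rw [← h.ap_braid_mul, mul_assoc, Units.mul_inv_cancel_left]
    _ = σ (ap t f) * ap C 1 := by
      rw [h.ap_braid_shift_mul, h.ap_braid_braid, h.shift_trace]; simp only [mul_assoc]
    _ = ap C (σ (ap t f)) := by rw [← h.ap_braid_shift_mul, mul_one]

theorem trace_braid_conj (h : IsTracedMonoid ap σ bul B C t) (f : M) :
    ap t (C * σ f * ↑C⁻¹) = σ (ap t f) := by
  simpa only [inv_inv] using h.inv.trace_braid_inv_conj f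

end IsTracedMonoid

namespace HasArity

theorem trace (h : IsTracedMonoid ap σ bul B C t) {w : M} {k n : ℕ}
    (hw : HasArity σ bul B w (k + 1) (n + 1)) : HasArity σ bul B (ap t w) k n := by
  calc bul (ap t w) * B * B ^ k
      = t * (bul w * B * B ^ (k + 1)) := by
        rw [h.bul_trace_mul_B, pow_succ']; simp only [mul_assoc]
    _ = σ (ap t w) * B ^ n := by rw [hw, h.shift_trace, pow_succ']; simp only [mul_assoc]

theorem bul_ap_one (h : IsExtMonoid ap σ bul B C) {x : M} (hx : HasArity σ bul B x 0 1) :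
    bul (ap x 1) = x := by
  have arity_x : bul x * B = σ x * B := by
    simpa only [HasArity, pow_zero, pow_one, mul_one] using hx
  rw [h.bul_ap, mul_assoc, arity_x, ← mul_assoc, ← h.mul_bul, mul_assoc, h.bul_one_mul_B, mul_one]

theorem eq_bul_one (h : IsExtMonoid ap σ bul B C) {x : M} (hx : HasArity σ bul B x 0 1)
    (mul_B : x * B = 1) : x = bul 1 := by
  have ap_one : ap x 1 = 1 := by
    rw [← one_mul (ap x 1), ← h.ap_bul_mul_B, hx.bul_ap_one h, mul_B, h.ap_one]
  rw [← hx.bul_ap_one h, ap_one]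

end HasArity

/-- The unit `α = Tr (Tr ∘ (B Tr) ∘ (B C⁺) ∘ C⁺)` of the duality. -/
def dualUnit (ap : M → M → M) (σ : M →* M) (C : Mˣ) (t : M) : M :=
  ap t (t * (σ t * (σ C * C)))

/-- The counit `β = Tr (C⁺ ∘ (B C⁺) ∘ (B B) ∘ B)` of the duality. -/
def dualCounit (ap : M → M → M) (σ : M →* M) (B : M) (C : Mˣ) (t : M) : M :=
  ap t (C * (σ C * (σ B * B)))

namespace IsTracedMonoid

theorem hasArity_dualUnit (h : IsTracedMonoid ap σ bul B C t) :
    HasArity σ bul B (dualUnit ap σ C t) 0 2 :=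
  have hB := h.toIsExtMonoid
  have braid := h.hasArity_braid
  have trace := h.hasArity_trace
  .trace h <| trace.mul hB <| (trace.shift hB).mul hB <| (braid.shift hB).mul hB braid.add_one

theorem hasArity_dualCounit (h : IsTracedMonoid ap σ bul B C t) :
    HasArity σ bul B (dualCounit ap σ B C t) 2 0 :=
  have hB := h.toIsExtMonoid
  have braid := h.hasArity_braid
  have arityB := h.hasArity_B
  .trace h <| braid.add_one.mul hB <| (braid.shift hB).mul hB <| (arityB.shift hB).mul hB arityB

theorem braid_mul_shift_dualCounit (h : IsTracedMonoid ap σ bul B C t) :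
    C * σ (dualCounit ap σ B C t) = σ ↑C⁻¹ * dualCounit ap σ B C t := by
  have conj : C * σ (C * (σ C * (σ B * B))) * ↑C⁻¹ =
      σ (↑C⁻¹ * σ ↑C⁻¹) * (C * (σ C * (σ B * B))) :=
    calc C * σ (C * (σ C * (σ B * B))) * ↑C⁻¹
        = C * σ C * σ (σ C) * σ (σ B) * σ B * ↑C⁻¹ := by simp only [map_mul, mul_assoc]
      _ = C * σ C * σ (σ C) * σ (σ B) * ↑C⁻¹ * σ ↑C⁻¹ * B := by grind [h.shift_B_mul_braid_inv]
      _ = C * σ C * σ (σ C) * ↑C⁻¹ * σ (σ B) * σ ↑C⁻¹ * B := by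
        grind [h.shift_shift_mul_braid_inv B]
      _ = C * σ C * σ (σ C) * ↑C⁻¹ * σ ↑C⁻¹ * σ (σ ↑C⁻¹) * σ B * B := by
        grind [congrArg σ h.shift_B_mul_braid_inv]
      _ = C * σ C * ↑C⁻¹ * σ (σ C) * σ ↑C⁻¹ * σ (σ ↑C⁻¹) * σ B * B := by
        grind [h.shift_shift_mul_braid_inv C]
      _ = C * σ C * ↑C⁻¹ * σ ↑C⁻¹ * σ (σ ↑C⁻¹) * σ C * σ B * B := by
        grind [congrArg σ h.isBraiding.inv_mul_shift_inv_mul]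
      _ = C * ↑C⁻¹ * σ ↑C⁻¹ * C * σ (σ ↑C⁻¹) * σ C * σ B * B := by
        grind [h.isBraiding.inv_mul_shift_inv_mul]
      _ = σ ↑C⁻¹ * σ (σ ↑C⁻¹) * C * σ C * σ B * B := by
        rw [Units.mul_inv, one_mul]; grind [h.shift_shift_mul_braid ↑C⁻¹]
      _ = σ (↑C⁻¹ * σ ↑C⁻¹) * (C * (σ C * (σ B * B))) := by simp only [map_mul, mul_assoc]
  rw [dualCounit, ← h.trace_braid_conj, conj, h.trace_shift_mul, ← mul_assoc, ← mul_assoc,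
    Units.mul_inv, one_mul]

theorem shift_dualUnit_mul_braid (h : IsTracedMonoid ap σ bul B C t) :
    σ (dualUnit ap σ C t) * C = dualUnit ap σ C t * σ ↑C⁻¹ := by
  have conj : ↑C⁻¹ * σ (t * (σ t * (σ C * C))) * C =
      t * (σ t * (σ C * C)) * σ (σ ↑C⁻¹ * ↑C⁻¹) :=
    calc ↑C⁻¹ * σ (t * (σ t * (σ C * C))) * C
        = ↑C⁻¹ * σ t * σ (σ t) * σ (σ C) * σ C * C := by simp only [map_mul, mul_assoc]
      _ = t * σ ↑C⁻¹ * ↑C⁻¹ * σ (σ t) * σ (σ C) * σ C * C := by grind [h.braid_inv_mul_shift_trace]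
      _ = t * σ ↑C⁻¹ * σ (σ t) * ↑C⁻¹ * σ (σ C) * σ C * C := by
        grind [h.shift_shift_mul_braid_inv t]
      _ = t * σ t * σ (σ ↑C⁻¹) * σ ↑C⁻¹ * ↑C⁻¹ * σ (σ C) * σ C * C := by
        grind [congrArg σ h.braid_inv_mul_shift_trace]
      _ = t * σ t * σ (σ ↑C⁻¹) * σ ↑C⁻¹ * σ (σ C) * ↑C⁻¹ * σ C * C := by
        grind [h.shift_shift_mul_braid_inv C]
      _ = t * σ t * σ (σ ↑C⁻¹) * σ ↑C⁻¹ * σ (σ C) * σ C * C * σ ↑C⁻¹ := by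
        grind [h.isBraiding.shift_mul_mul_shift_inv]
      _ = t * σ t * σ (σ ↑C⁻¹) * σ (σ C) * σ C * σ (σ ↑C⁻¹) * C * σ ↑C⁻¹ := by
        grind [congrArg σ h.isBraiding.shift_mul_mul_shift_inv]
      _ = t * σ t * σ C * σ (σ ↑C⁻¹) * C * σ ↑C⁻¹ := by grind [congrArg (σ ∘ σ) C.inv_mul]
      _ = t * σ t * σ C * C * σ (σ ↑C⁻¹) * σ ↑C⁻¹ := by grind [h.shift_shift_mul_braid ↑C⁻¹]
      _ = t * (σ t * (σ C * C)) * σ (σ ↑C⁻¹ * ↑C⁻¹) := by simp only [map_mul, mul_assoc]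
  rw [dualUnit, ← h.trace_braid_inv_conj, conj, h.trace_mul_shift, mul_assoc, mul_assoc,
    Units.inv_mul, mul_one]

end IsTracedMonoid

variable {θ : Mˣ}

/-- The axioms of a traced balanced extensional BC±I-algebra in terms of the composition monoid:
`t` is `Tr`, and `θ`, `θ⁻¹` are the twists `θ⁺`, `θ⁻`. -/
structure IsTracedBalancedMonoid (ap : M → M → M) (σ : M →* M) (bul : M → M) (B : M) (C : Mˣ)
    (t : M) (θ : Mˣ) : Prop extends IsTracedMonoid ap σ bul B C t where
  yanking : ap t C = θ
  yanking_inv : ap t ↑C⁻¹ = ↑θ⁻¹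
  exchange (x : M) : ap t (ap t (C * x * ↑C⁻¹)) = ap t (ap t x)
  B_mul_twist : B * θ = θ * C * θ * C * B

namespace IsTracedBalancedMonoid

theorem isBalancedTrace (h : IsTracedBalancedMonoid ap σ bul B C t θ) :
    IsBalancedTrace σ C θ (ap t) where
  toIsBraiding := h.isBraiding
  trace_shift_mul := h.trace_shift_mul
  trace_mul_shift := h.trace_mul_shift
  trace_conj := h.trace_braid_conj
  trace_conj_inv := h.trace_braid_inv_conj
  trace_trace_conj := h.exchange
  trace_braid := h.yanking
  trace_braid_inv := h.yanking_inv

theorem trace_mul_shift_braid_inv_mul_B (h : IsTracedBalancedMonoid ap σ bul B C t θ) :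
    t * σ ↑C⁻¹ * B = σ ↑θ⁻¹ := by
  rw [← h.shift_trace, h.yanking_inv]

theorem trace_trace_mul_braid (h : IsTracedBalancedMonoid ap σ bul B C t θ) :
    ap t (t * C) = bul 1 := by
  have arity : HasArity σ bul B (ap t (t * C)) 0 1 :=
    .trace h.toIsTracedMonoid (h.hasArity_trace.mul h.toIsExtMonoid h.hasArity_braid)
  apply arity.eq_bul_one h.toIsExtMonoid
  calc ap t (t * C) * B
      = ap t (t * σ ↑C⁻¹ * B * C) := by
        rw [← h.trace_mul_shift, mul_assoc, h.braid_mul_shift_B]; simp only [mul_assoc]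
    _ = 1 := by
      rw [h.trace_mul_shift_braid_inv_mul_B, h.trace_shift_mul, h.yanking, Units.inv_mul]

theorem trace_mul_shift_braid_inv_mul_dualCounit
    (h : IsTracedBalancedMonoid ap σ bul B C t θ) :
    t * σ ↑C⁻¹ * dualCounit ap σ B C t = θ * C * B * ↑θ⁻¹ := by
  have inner_trace : ap t (↑C⁻¹ * σ ↑C⁻¹ * C * B) = C * B * ↑θ⁻¹ :=
    calc ap t (↑C⁻¹ * σ ↑C⁻¹ * C * B)
        = ap t (σ C * ↑C⁻¹ * σ ↑C⁻¹ * B) := by rw [h.isBraiding.inv_mul_shift_inv_mul]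
      _ = ap t (σ (C * B) * ↑C⁻¹) := by grind [h.shift_B_mul_braid_inv]
      _ = C * B * ↑θ⁻¹ := by rw [h.trace_shift_mul, h.yanking_inv]
  have slide : σ (t * σ ↑C⁻¹) * (C * (σ C * (σ B * B))) = C * σ (C * B * ↑θ⁻¹) :=
    calc σ (t * σ ↑C⁻¹) * (C * (σ C * (σ B * B)))
        = σ t * σ (σ ↑C⁻¹) * C * σ C * σ B * B := by simp only [map_mul, mul_assoc]
      _ = σ t * C * σ (σ ↑C⁻¹) * σ C * σ B * B := by grind [h.shift_shift_mul_braid ↑C⁻¹]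
      _ = C * t * σ ↑C⁻¹ * σ (σ ↑C⁻¹) * σ C * σ B * B := by grind [h.shift_trace_mul_braid]
      _ = C * (t * σ (↑C⁻¹ * σ ↑C⁻¹ * C * B) * B) := by simp only [map_mul, mul_assoc]
      _ = C * σ (C * B * ↑θ⁻¹) := by rw [← h.shift_trace, inner_trace]
  rw [dualCounit, ← h.trace_shift_mul, slide, h.trace_mul_shift, h.yanking]
  simp only [mul_assoc]

theorem dualUnit_mul_shift_braid_inv_mul_B (h : IsTracedBalancedMonoid ap σ bul B C t θ) :
    dualUnit ap σ C t * σ ↑C⁻¹ * B = ↑θ⁻¹ * t * C * θ := by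
  have slide : t * (σ t * (σ C * C)) * σ (σ ↑C⁻¹ * B) = σ (↑θ⁻¹ * t * C) * C :=
    calc t * (σ t * (σ C * C)) * σ (σ ↑C⁻¹ * B)
        = t * σ t * σ C * C * σ (σ ↑C⁻¹) * σ B := by simp only [map_mul, mul_assoc]
      _ = t * σ t * σ C * σ (σ ↑C⁻¹) * C * σ B := by grind [h.shift_shift_mul_braid ↑C⁻¹]
      _ = t * σ t * σ C * σ (σ ↑C⁻¹) * σ ↑C⁻¹ * B * C := by grind [h.braid_mul_shift_B]
      _ = t * σ t * σ (σ ↑C⁻¹) * σ ↑C⁻¹ * σ (σ C) * B * C := by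
        grind [congrArg σ h.isBraiding.mul_shift_inv_mul_inv]
      _ = t * σ t * σ (σ ↑C⁻¹) * σ ↑C⁻¹ * B * σ C * C := by grind [h.shift_shift_mul_B C]
      _ = t * σ ↑C⁻¹ * σ (σ t) * B * σ C * C := by grind [congrArg σ h.braid_inv_mul_shift_trace]
      _ = t * σ ↑C⁻¹ * B * σ t * σ C * C := by grind [h.shift_shift_mul_B t]
      _ = σ (↑θ⁻¹ * t * C) * C := by
        rw [h.trace_mul_shift_braid_inv_mul_B]; simp only [map_mul]
  rw [dualUnit, mul_assoc, ← h.trace_mul_shift, slide, h.trace_shift_mul, h.yanking]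

theorem dualUnit_mul_shift_dualCounit_eq_trace (h : IsTracedBalancedMonoid ap σ bul B C t θ) :
    dualUnit ap σ C t * σ (dualCounit ap σ B C t) =
      ap t (t * σ (θ * C * B * ↑θ⁻¹) * C) := by
  set β := dualCounit ap σ B C t with hβ
  calc dualUnit ap σ C t * σ β
      = ap t (t * σ t * σ C * (C * σ (σ β))) := by
        rw [dualUnit, ← h.trace_mul_shift]; simp only [mul_assoc]
    _ = ap t (t * σ (t * (C * σ β)) * C) := by
      rw [← h.shift_shift_mul_braid]; simp only [map_mul, mul_assoc]
    _ = ap t (t * σ (θ * C * B * ↑θ⁻¹) * C) := by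
      rw [hβ, h.braid_mul_shift_dualCounit, ← mul_assoc,
        h.trace_mul_shift_braid_inv_mul_dualCounit]

theorem shift_dualUnit_mul_dualCounit_eq_trace (h : IsTracedBalancedMonoid ap σ bul B C t θ) :
    σ (dualUnit ap σ C t) * dualCounit ap σ B C t =
      ap t (C * σ (↑θ⁻¹ * t * C * θ) * B) := by
  set α := dualUnit ap σ C t with hα
  calc σ α * dualCounit ap σ B C t
      = ap t (σ (σ α) * C * σ C * σ B * B) := by
        rw [dualCounit, ← h.trace_shift_mul]; simp only [mul_assoc]
    _ = ap t (C * σ (σ α * C * B) * B) := by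
      rw [h.shift_shift_mul_braid]; simp only [map_mul, mul_assoc]
    _ = ap t (C * σ (↑θ⁻¹ * t * C * θ) * B) := by
      rw [hα, h.shift_dualUnit_mul_braid, h.dualUnit_mul_shift_braid_inv_mul_B]

theorem trace_twisted_loops_eq (h : IsTracedBalancedMonoid ap σ bul B C t θ) :
    ap t (t * σ (θ * C * B * ↑θ⁻¹) * C) = ap t (C * σ (↑θ⁻¹ * t * C * θ) * B) := by
  have T := h.isBalancedTrace
  calc ap t (t * σ (θ * C * B * ↑θ⁻¹) * C)
      = ap t (t * σ (θ * C * B) * C * ↑θ⁻¹) := by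
        rw [mul_assoc (_ * _) (C : M), T.braid_mul_twist_inv]; simp only [map_mul, mul_assoc]
    _ = ap t (↑θ⁻¹ * (t * σ (θ * C * B) * C)) := (T.trace_twist_inv_mul _).symm
    _ = ap t (C * σ (↑θ⁻¹ * t * C * θ) * B) := congrArg (ap t) <|
      calc ↑θ⁻¹ * (t * σ (θ * C * B) * C)
          = ↑θ⁻¹ * t * σ θ * σ C * σ B * C := by simp only [map_mul, mul_assoc]
        _ = ↑θ⁻¹ * t * σ θ * σ C * C * σ C * B := by grind [h.shift_B_mul_braid]
        _ = ↑θ⁻¹ * t * σ C * σ (σ θ) * C * σ C * B := by grind [congrArg σ T.twist_mul_braid]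
        _ = ↑θ⁻¹ * t * σ C * C * σ (σ θ) * σ C * B := by grind [h.shift_shift_mul_braid θ]
        _ = ↑θ⁻¹ * t * σ C * C * σ C * σ θ * B := by grind [congrArg σ T.braid_mul_twist]
        _ = ↑θ⁻¹ * C * σ t * σ C * σ θ * B := by grind [h.braid_mul_shift_trace]
        _ = C * σ ↑θ⁻¹ * σ t * σ C * σ θ * B := by grind [T.twist_inv_mul_braid]
        _ = C * σ (↑θ⁻¹ * t * C * θ) * B := by simp only [map_mul, mul_assoc]

theorem trace_braid_mul_B_mul_twist_mul (h : IsTracedBalancedMonoid ap σ bul B C t θ) (a : M) :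
    ap t (C * B * θ * a) = ↑θ⁻¹ * ap t (C * σ (θ * a) * B) := by
  have T := h.isBalancedTrace
  -- The element to which Exchange is applied, chosen so that the traces on both sides split off.
  have conj : ap t (C * (σ C * C * B * σ a * C) * ↑C⁻¹) = C * B * ap t (C * σ a) :=
    calc ap t (C * (σ C * C * B * σ a * C) * ↑C⁻¹)
        = ap t (C * σ C * C * B * σ a) := by
          rw [← mul_assoc (C : M), Units.mul_inv_cancel_right]; simp only [mul_assoc]
      _ = ap t (σ C * C * σ C * B * σ a) := by rw [h.yang_baxter]
      _ = ap t (σ (C * B) * (C * σ a)) := by grind [h.shift_B_mul_braid]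
      _ = C * B * ap t (C * σ a) := h.trace_shift_mul _ _
  have slide : σ C * C * B * σ a * C = σ (C * σ a * C) * C * σ (C * B) :=
    calc σ C * C * B * σ a * C
        = σ C * C * σ (σ a) * B * C := by grind [h.shift_shift_mul_B a]
      _ = σ C * C * σ (σ a) * σ C * C * σ B := by grind [h.B_mul_braid]
      _ = σ C * σ (σ a) * C * σ C * C * σ B := by grind [h.shift_shift_mul_braid a]
      _ = σ C * σ (σ a) * σ C * C * σ C * σ B := by grind [h.yang_baxter]
      _ = σ (C * σ a * C) * C * σ (C * B) := by simp only [map_mul, mul_assoc]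
  calc ap t (C * B * θ * a)
      = ap t (C * B * ap t (C * σ a)) := by rw [h.trace_mul_shift, h.yanking, mul_assoc _ _ a]
    _ = ap t (ap t (σ (C * σ a * C) * C * σ (C * B))) := by rw [← conj, h.exchange, slide]
    _ = ap t (C * σ a * (C * θ * C * B)) := by
      rw [h.trace_mul_shift, h.trace_shift_mul, h.yanking]; simp only [mul_assoc]
    _ = ap t (C * σ a * ↑θ⁻¹ * B * θ) := by
      rw [mul_assoc _ B, h.B_mul_twist]; simp only [mul_assoc, Units.inv_mul_cancel_left]
    _ = ap t (θ * C * σ a * ↑θ⁻¹ * B) := by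
      rw [← T.trace_twist_mul]; simp only [mul_assoc]
    _ = ap t (C * σ (θ * a) * ↑θ⁻¹ * B) := by grind [T.twist_mul_braid]
    _ = ap t (C * ↑θ⁻¹ * σ (θ * a) * B) := by
      grind [(T.commute_shift_twist (θ * a)).units_inv_right.eq]
    _ = ap t (σ ↑θ⁻¹ * (C * σ (θ * a) * B)) := by grind [T.braid_mul_twist_inv]
    _ = ↑θ⁻¹ * ap t (C * σ (θ * a) * B) := h.trace_shift_mul _ _

theorem twist_mul_braid_mul_B (h : IsTracedBalancedMonoid ap σ bul B C t θ) :
    θ * C * B = σ ↑θ⁻¹ * ↑C⁻¹ * B * θ := by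
  calc θ * C * B
      = σ ↑θ⁻¹ * σ θ * θ * C * B := by grind [congrArg σ θ.inv_mul]
    _ = σ ↑θ⁻¹ * ↑C⁻¹ * (θ * C * θ * C * B) := by
      rw [h.isBalancedTrace.shift_twist_eq_conj_inv]; simp only [mul_assoc]
    _ = σ ↑θ⁻¹ * ↑C⁻¹ * B * θ := by rw [← h.B_mul_twist, ← mul_assoc]

theorem trace_braid_inv_mul_B_mul_trace_mul_braid
    (h : IsTracedBalancedMonoid ap σ bul B C t θ) :
    ap t (↑C⁻¹ * B * t * C) = 1 := by
  calc ap t (↑C⁻¹ * B * t * C)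
      = ap t (↑C⁻¹ * σ (t * C) * C * σ (bul B * B * B)) := by
        rw [mul_assoc, mul_assoc, ← mul_assoc B, h.B_mul_trace_mul_braid]; simp only [mul_assoc]
    _ = σ (bul 1) * (bul B * B * B) := by
      rw [h.trace_mul_shift, h.trace_braid_inv_conj, h.trace_trace_mul_braid]
    _ = 1 := by rw [← mul_assoc, ← mul_assoc, h.shift_bul_one_mul_bul_B_mul_B_mul_B]

theorem trace_twisted_loop_eq_one (h : IsTracedBalancedMonoid ap σ bul B C t θ) :
    ap t (C * σ (↑θ⁻¹ * t * C * θ) * B) = 1 := by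
  rw [← Units.mul_right_inj θ⁻¹, mul_one]
  calc ↑θ⁻¹ * ap t (C * σ (↑θ⁻¹ * t * C * θ) * B)
      = ap t (C * B * θ * (↑θ⁻¹ * (↑θ⁻¹ * t * C * θ))) := by
        rw [h.trace_braid_mul_B_mul_twist_mul, Units.mul_inv_cancel_left]
    _ = ap t (C * B * (↑θ⁻¹ * t * C) * θ) := by
      simp only [mul_assoc, Units.mul_inv_cancel_left]
    _ = ap t (θ * C * B * ↑θ⁻¹ * t * C) := by
      rw [← h.isBalancedTrace.trace_twist_mul]; simp only [mul_assoc]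
    _ = ap t (σ ↑θ⁻¹ * (↑C⁻¹ * B * t * C)) := by
      rw [h.twist_mul_braid_mul_B, Units.mul_inv_cancel_right]; simp only [mul_assoc]
    _ = ↑θ⁻¹ := by
      rw [h.trace_shift_mul, h.trace_braid_inv_mul_B_mul_trace_mul_braid, mul_one]

theorem dualUnit_mul_shift_dualCounit (h : IsTracedBalancedMonoid ap σ bul B C t θ) :
    dualUnit ap σ C t * σ (dualCounit ap σ B C t) = 1 := by
  rw [h.dualUnit_mul_shift_dualCounit_eq_trace, h.trace_twisted_loops_eq,
    h.trace_twisted_loop_eq_one]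

theorem shift_dualUnit_mul_dualCounit (h : IsTracedBalancedMonoid ap σ bul B C t θ) :
    σ (dualUnit ap σ C t) * dualCounit ap σ B C t = 1 := by
  rw [h.shift_dualUnit_mul_dualCounit_eq_trace, h.trace_twisted_loop_eq_one]

end IsTracedBalancedMonoid

end ExtensionalMonoid

namespace BCStruct

variable {α : Type*} {S : BCStruct α} {tp tm Tr : α}

namespace IsExt

theorem comp_apply (h : S.IsExt) (a b x : α) : S.ap (S.comp a b) x = S.ap a (S.ap b x) :=
  h.hB a b x

theorem shift_shift_comp_B (h : S.IsExt) (a : α) :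
    S.comp (S.ap S.B (S.ap S.B a)) S.B = S.comp S.B (S.ap S.B a) := by
  have applied := congrArg (S.ap · a) h.hAlpha
  simpa only [comp, h.hB, h.hCp] using applied

theorem shift_comp (h : S.IsExt) (a b : α) :
    S.ap S.B (S.comp a b) = S.comp (S.ap S.B a) (S.ap S.B b) := by
  have applied := congrArg (S.ap · b) (h.shift_shift_comp_B a)
  simp only [h.comp_apply] at applied
  exact applied.symm

theorem comp_assoc_s15 (h : S.IsExt) (a b c : α) :
    S.comp (S.comp a b) c = S.comp a (S.comp b c) := by
  have applied := congrArg (S.ap · c) (h.shift_comp a b)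
  simp only [h.comp_apply] at applied
  exact applied

theorem one_comp (h : S.IsExt) (a : α) : S.comp S.I a = a := by
  rw [comp, h.hLam, h.hI]

theorem comp_one (h : S.IsExt) (a : α) : S.comp a S.I = a := by
  have applied := congrArg (S.ap · a) h.hRho
  simpa only [comp, h.hLam, h.hCp, h.hI] using applied

theorem ap_bul (h : S.IsExt) (x a : α) : S.ap (S.bul x) a = S.ap a x := by
  rw [bul, h.hCp, h.hI]

theorem ap_ap_Cp (h : S.IsExt) (a b : α) : S.ap (S.ap S.Cp a) b = S.comp (S.bul b) a := by
  have applied := congrArg (fun x ↦ S.ap (S.ap (S.ap x S.I) b) a) h.hBCp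
  simp only [h.comp_apply, h.hB, h.hCp, h.hLam, h.hI] at applied
  exact applied.symm

theorem ap_ap_Cm (h : S.IsExt) (a b : α) : S.ap (S.ap S.Cm a) b = S.comp (S.bul b) a := by
  rw [← h.hC2, h.ap_ap_Cp]

theorem bul_comp_B_of_hasArity (h : S.IsExt) {x : α} {n : ℕ} (hx : S.hasArity x 0 n) :
    S.comp (S.bul x) S.B = S.comp (S.ap S.B x) (S.pow S.B n) := by
  rw [← hx, pow, h.comp_one, h.ap_ap_Cp]

theorem bul_comp_pow_succ_of_hasArity (h : S.IsExt) {x : α} {k : ℕ} (hx : S.hasArity x k 0) :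
    S.comp (S.bul x) (S.pow S.B (k + 1)) = S.ap S.B x := by
  rw [pow, ← h.comp_assoc_s15, ← h.ap_ap_Cp, hx, pow, h.comp_one]

theorem trace_trace_conj (h : S.IsExt) (hTr : S.IsTrace tp tm Tr) (x : α) :
    S.ap Tr (S.ap Tr (S.comp (S.comp S.Cp x) S.Cm)) = S.ap Tr (S.ap Tr x) := by
  have applied := congrArg (S.ap · x) hTr.exch
  simp only [h.comp_apply, h.hCp] at applied
  exact applied

/-- The carrier of an extensional BC±I-algebra, regarded as the monoid with multiplication `∘` and
unit `I`. -/
def CompMonoid (_ : S.IsExt) : Type _ := α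

instance (h : S.IsExt) : Monoid h.CompMonoid where
  mul := S.comp
  one := S.I
  mul_assoc := h.comp_assoc_s15
  one_mul := h.one_comp
  mul_one := h.comp_one

/-- Application of `B` as an endomorphism of the composition monoid. -/
def shift (h : S.IsExt) : h.CompMonoid →* h.CompMonoid where
  toFun := S.ap S.B
  map_one' := h.hLam
  map_mul' := h.shift_comp

/-- `C⁺` as a unit of the composition monoid, with inverse `C⁻`. -/
def braid (h : S.IsExt) : h.CompMonoidˣ where
  val := S.Cp
  inv := S.Cm
  val_inv := h.hCox1p.trans ((congrArg (S.ap S.B) h.hLam).trans h.hLam)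
  inv_val := h.hCox1m.trans ((congrArg (S.ap S.B) h.hLam).trans h.hLam)

/-- `θ⁺` as a unit of the composition monoid, with inverse `θ⁻`. -/
def twist (h : S.IsExt) (hBal : S.IsBalanced tp tm) : h.CompMonoidˣ where
  val := tp
  inv := tm
  val_inv := hBal.invPM.trans h.hLam
  inv_val := hBal.invMP.trans h.hLam

theorem pow_eq (h : S.IsExt) (a : h.CompMonoid) (k : ℕ) : a ^ k = S.pow a k := by
  induction k with
  | zero => exact pow_zero a
  | succ k ih => rw [pow_succ', ih]; rfl

theorem hasArity_iff (h : S.IsExt) (x : α) (k n : ℕ) :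
    HasArity (M := h.CompMonoid) h.shift S.bul S.B x k n ↔ S.hasArity x k n := by
  rw [BCStruct.hasArity, h.ap_ap_Cp, ← h.pow_eq S.B, ← h.pow_eq S.B]
  rfl

theorem isExtMonoid (h : S.IsExt) :
    IsExtMonoid (M := h.CompMonoid) S.ap h.shift S.bul S.B h.braid where
  ap_one := h.hI
  ap_mul := h.hB
  ap_B _ := rfl
  ap_shift _ _ := rfl
  ap_bul := h.ap_bul
  ap_ap_braid := h.ap_ap_Cp
  ap_ap_braid_inv := h.ap_ap_Cm
  bul_one_mul_B := (h.ap_ap_Cp S.B S.I).symm.trans (h.hRho.trans h.hLam)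
  hasArity_B := (h.hasArity_iff S.B 2 1).mpr <| by
    simpa only [BCStruct.hasArity, pow, h.comp_one] using h.hAlpha
  hasArity_braid := (h.hasArity_iff S.Cp 2 2).mpr <| by
    simpa only [BCStruct.hasArity, pow, h.comp_one] using h.hCox2p
  hasArity_braid_inv := (h.hasArity_iff S.Cm 2 2).mpr <| by
    simpa only [BCStruct.hasArity, pow, h.comp_one] using h.hCox2m
  yang_baxter := (h.comp_assoc_s15 _ _ _).trans (h.hCox3p.trans (h.comp_assoc_s15 _ _ _).symm)
  shift_B_mul_braid := h.hBCp.trans (h.comp_assoc_s15 _ _ _).symm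
  shift_B_mul_braid_inv := h.hBCm.trans (h.comp_assoc_s15 _ _ _).symm

theorem isTracedBalancedMonoid (h : S.IsExt) (hBal : S.IsBalanced tp tm)
    (hTr : S.IsTrace tp tm Tr) :
    IsTracedBalancedMonoid (M := h.CompMonoid) S.ap h.shift S.bul S.B h.braid Tr
      (h.twist hBal) where
  toIsExtMonoid := h.isExtMonoid
  hasArity_trace := (h.hasArity_iff Tr 1 2).mpr <| by
    simpa only [BCStruct.hasArity, pow, h.comp_one] using hTr.leftT
  right_tightening := by
    have tightening := hTr.rightT
    simp only [h.ap_ap_Cp, ← h.comp_assoc_s15] at tightening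
    exact tightening
  yanking := hTr.yankP
  yanking_inv := hTr.yankM
  exchange := h.trace_trace_conj hTr
  B_mul_twist := by
    have naturality := hBal.natBP
    simp only [← h.comp_assoc_s15] at naturality
    exact naturality

end IsExt

end BCStruct

end Paper

/-- Every traced balanced extensional BC±I-algebra has a duality given by
`α := Tr (Tr ∘ (B Tr) ∘ (B C⁺) ∘ C⁺)` and `β := Tr (C⁺ ∘ (B C⁺) ∘ (B B) ∘ B)`. -/
theorem stmt_15 {α : Type*} (S : Paper.BCStruct α) (hS : S.IsExt)
    {tp tm Tr : α} (hBal : S.IsBalanced tp tm) (hTr : S.IsTrace tp tm Tr) :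
    S.IsDuality
      (S.ap Tr (S.comp Tr (S.comp (S.ap S.B Tr) (S.comp (S.ap S.B S.Cp) S.Cp))))
      (S.ap Tr (S.comp S.Cp (S.comp (S.ap S.B S.Cp) (S.comp (S.ap S.B S.B) S.B)))) := by
  have h := hS.isTracedBalancedMonoid hBal hTr
  exact
    { arAl := hS.bul_comp_B_of_hasArity ((hS.hasArity_iff _ 0 2).mp h.hasArity_dualUnit)
      arBe := hS.bul_comp_pow_succ_of_hasArity ((hS.hasArity_iff _ 2 0).mp h.hasArity_dualCounit)
      d1 := h.dualUnit_mul_shift_dualCounit.trans hS.hLam.symm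
      d2 := h.shift_dualUnit_mul_dualCounit.trans hS.hLam.symm }
end
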